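/- arXiv:1708.03991 — 7 statements merged into one kernel-verified Lean document; each statement's English description precedes it below -/
import Mathlib

section
/- Let D and E be reflexive relations on a finite type V. Then the information graph E is partially nested if and only if E equals the transitive closure of its own precedence relation, i.e., for all i j : V, E i j ↔ Relation.TransGen (prec E) i j. (Lemma 2 of the paper: G ∈ PN(Θ) if and only if G equals the transitive closure of its precedence graph.) -/
/-- The precedence relation induced by the coupling relation `D` and the
information graph `E`: subsystem `j` is a precedent of subsystem `i` if some
subsystem `k` whose outputs `i` has access to can be affected by `j`'s input. -/
def prec {V : Type*} (D E : V → V → Prop) (j i : V) : Prop := ∃ k, E k i ∧ D j k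

/-- Partial nestedness of the information graph `E` with respect to the
coupling relation `D`: whenever `j` is a precedent of `i`, the in-neighborhood
of `j` is contained in that of `i`. -/
def PartiallyNested {V : Type*} (D E : V → V → Prop) : Prop :=
  ∀ j i, prec D E j i → ∀ k, E k j → E k i

/-- Lemma 2: `E` is partially nested if and only if `E` equals the transitive
closure of its own precedence relation. -/
theorem stmt_0 {V : Type*} [Fintype V] (D E : V → V → Prop)
    (hD : Reflexive D) (hE : Reflexive E) :
    PartiallyNested D E ↔ ∀ i j, E i j ↔ Relation.TransGen (prec D E) i j := by
  constructor
  · intro h i j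
    constructor
    · intro hij
      exact Relation.TransGen.single ⟨i, hij, hD i⟩
    · intro t
      induction t with
      | single hp => exact h _ _ hp _ (hE i)
      | tail _ hp ih => exact h _ _ hp _ ih
  · intro h j i hp k hk
    exact (h k i).2 (Relation.TransGen.tail ((h k j).1 hk) hp)
end

section
/- Let E be a reflexive, partially nested relation on a finite type V (with coupling relation D). Then the transitive closure of the precedence relation of E is contained in E: for all j i, Relation.TransGen (prec E) j i → E j i. (The 'only if' direction of Lemma 2: a chain of precedences j = v₁ ≺ v₂ ≺ … ≺ v_m = i yields nested information sets, which together with the self-loops of Assumption 3 forces the edge (j,i) ∈ E.) -/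
/-- The 'only if' direction of Lemma 2: if `E` is reflexive and partially
nested, then the transitive closure of its precedence relation is contained
in `E`. -/
theorem stmt_1 {V : Type*} [Fintype V] (D E : V → V → Prop)
    (hE : Reflexive E) (hPN : PartiallyNested D E) :
    ∀ j i, Relation.TransGen (prec D E) j i → E j i := by
  intro j i h
  induction h with
  | single h => exact hPN _ _ h _ (hE j)
  | tail _ h ih => exact hPN _ _ h _ ih
end

section
/- Let D and E be reflexive relations on a finite type V, and let Ḡ := Relation.TransGen (prec E) be the transitive closure of the precedence relation of E. Then Ḡ is a fixed point of the information-relaxation operator: Relation.TransGen (prec Ḡ) = Ḡ, i.e., for all j i, Relation.TransGen (prec (Relation.TransGen (prec E))) j i ↔ Relation.TransGen (prec E) j i. (Equation (9) in the proof of Theorem 1.) -/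
/-- Equation (9) in the proof of Theorem 1: the transitive closure of the
precedence graph is a fixed point of the information-relaxation operator. -/
theorem stmt_3 {V : Type*} [Fintype V] (D E : V → V → Prop)
    (hD : Reflexive D) (hE : Reflexive E) :
    ∀ j i, Relation.TransGen (prec D (Relation.TransGen (prec D E))) j i ↔
      Relation.TransGen (prec D E) j i := by
  intro j i
  constructor
  · intro h
    induction h with
    | single h =>
      obtain ⟨k, hk, hd⟩ := h
      exact Relation.TransGen.head ⟨k, hE k, hd⟩ hk
    | tail _ h ih =>
      obtain ⟨k, hk, hd⟩ := h
      exact ih.trans (Relation.TransGen.head ⟨k, hE k, hd⟩ hk)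
  · intro h
    exact Relation.TransGen.single ⟨j, h, hD j⟩
end

section
/- Let D and E be reflexive relations on a finite type V, and let Ḡ := Relation.TransGen (prec E). Then Ḡ is a feasible information relaxation: E is contained in Ḡ (∀ j i, E j i → Ḡ j i) and Ḡ is partially nested. (Feasibility part of Theorem 1: the transitive closure of the precedence graph is a partially nested supergraph of the given information graph.) -/
/-- Feasibility part of Theorem 1: the transitive closure of the precedence
graph is a partially nested supergraph of the given information graph. -/
theorem stmt_4 {V : Type*} [Fintype V] (D E : V → V → Prop)
    (hD : Reflexive D) (hE : Reflexive E) :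
    (∀ j i, E j i → Relation.TransGen (prec D E) j i) ∧
      PartiallyNested D (Relation.TransGen (prec D E)) := by
  refine ⟨fun j i h => .single ⟨j, h, hD j⟩, ?_⟩
  rintro j i ⟨k, hki, hjk⟩ l hlj
  exact (hlj.tail ⟨k, hE k, hjk⟩).trans hki
end

section
/- Let D be a reflexive coupling relation on a finite type V, let E be a reflexive information graph, and let G be a partially nested relation containing E (∀ j i, E j i → G j i). Then G contains the transitive closure of the precedence relation of E: for all j i, Relation.TransGen (prec E) j i → G j i. (Corollary 1: any partially nested supergraph of E must contain the transitive closure of the precedence graph of E.) -/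
/-- Corollary 1: any partially nested supergraph `G` of the information graph
`E` must contain the transitive closure of the precedence graph of `E`. -/
theorem stmt_5 {V : Type*} [Fintype V] (D E G : V → V → Prop)
    (hD : Reflexive D) (hE : Reflexive E)
    (hG : PartiallyNested D G) (hEG : ∀ j i, E j i → G j i) :
    ∀ j i, Relation.TransGen (prec D E) j i → G j i := by
  have step : ∀ j i k, prec D E j i → G k j → G k i := by
    rintro j i k ⟨l, hl, hd⟩ hk
    exact hG j i ⟨l, hEG _ _ hl, hd⟩ k hk
  intro j i h
  induction h with
  | single h => exact step _ _ _ h (hEG _ _ (hE j))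
  | tail _ h ih => exact step _ _ _ h ih
end

section
/- Let D and E be reflexive relations on a finite type V. Then Ḡ := Relation.TransGen (prec E) is the least element of the set of partially nested relations containing E: (i) E ⊆ Ḡ and Ḡ is partially nested; (ii) for every partially nested relation G with E ⊆ G, one has Ḡ ⊆ G. (Graph-theoretic content of Theorem 1: since the optimal cost J*(G) of the decentralized control problem is antitone in the information graph G, this ⊆-minimality means Ḡ maximizes the lower bound J*(G) over all partially nested information relaxations G ⊇ E.) -/
/-- Graph-theoretic content of Theorem 1: the transitive closure of the
precedence graph is the least partially nested relation containing `E`. -/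
theorem stmt_6 {V : Type*} [Fintype V] (D E : V → V → Prop)
    (hD : Reflexive D) (hE : Reflexive E) :
    ((∀ j i, E j i → Relation.TransGen (prec D E) j i) ∧
      PartiallyNested D (Relation.TransGen (prec D E))) ∧
    (∀ G : V → V → Prop, PartiallyNested D G → (∀ j i, E j i → G j i) →
      ∀ j i, Relation.TransGen (prec D E) j i → G j i) := by
  refine ⟨⟨fun j i h => .single ⟨j, h, hD j⟩, ?_⟩, ?_⟩
  · rintro j i ⟨m, hm, hj⟩ k hk
    exact (hk.tail ⟨m, hE m, hj⟩).trans hm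
  · intro G hG hEG j i h
    induction h with
    | single h =>
      obtain ⟨m, hm, hj⟩ := h
      exact hG _ _ ⟨m, hEG _ _ hm, hj⟩ _ (hEG _ _ (hE _))
    | tail _ h ih =>
      obtain ⟨m, hm, hj⟩ := h
      exact hG _ _ ⟨m, hEG _ _ hm, hj⟩ _ ih
end

section
/- Let n : ℕ and let f : (Fin n → ℝ) → (Fin n → ℝ) be strictly causal in the sense that for all x y : Fin n → ℝ and all i : Fin n, if x j = y j for every j < i then f x i = f y i. Then the map x ↦ x - f x is a bijection of Fin n → ℝ onto itself. (This is the invertibility claim underlying the nonlinear Youla parameterization: the map I − CBγ is invertible because the decentralized control policy γ is causal and the matrix CB is strictly block lower triangular, so the composition y ↦ CB γ(y) is strictly causal.) -/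
/-- Invertibility underlying the nonlinear Youla parameterization: if
`f : (Fin n → ℝ) → (Fin n → ℝ)` is strictly causal (the `i`-th component of
`f x` depends only on the components `x j` with `j < i`), then the map
`x ↦ x - f x` is a bijection. -/
theorem stmt_12 {n : ℕ} (f : (Fin n → ℝ) → (Fin n → ℝ))
    (hf : ∀ x y : Fin n → ℝ, ∀ i : Fin n, (∀ j, j < i → x j = y j) → f x i = f y i) :
    Function.Bijective (fun x : Fin n → ℝ => x - f x) := by
  constructor
  · intro x y hxy
    have h : ∀ i, x i - f x i = y i - f y i := fun i => congrFun hxy i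
    have key : ∀ i, x i = y i := by
      intro i
      induction i using WellFoundedLT.induction with
      | ind i ih =>
        have h1 := hf x y i ih
        have h2 := h i
        linarith
    exact funext key
  · intro z
    have key : ∀ k : ℕ, ∃ x : Fin n → ℝ, ∀ i : Fin n, i.val < k → x i = z i + f x i := by
      intro k
      induction k with
      | zero => exact ⟨0, fun i hi => absurd hi (Nat.not_lt_zero _)⟩
      | succ k ih =>
        obtain ⟨x, hx⟩ := ih
        refine ⟨z + f x, fun i hi => ?_⟩
        have h1 : f x i = f (z + f x) i := by
          apply hf
          intro j hj
          have hj2 : j.val < i.val := hj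
          exact hx j (by omega)
        rw [← h1]
        rfl
    obtain ⟨x, hx⟩ := key n
    refine ⟨x, funext fun i => ?_⟩
    have h1 := hx i i.isLt
    change x i - f x i = z i
    linarith
end
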